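/- arXiv:1707.01458 — 3 statements merged into one kernel-verified Lean document; each statement's English description precedes it below -/
import Mathlib

section
/- Let L > 0 and let g : ℝ → ℂ be an infinitely differentiable function that is periodic with period L. Then for every integer κ ≥ 2 and every integer N ≥ 1, |∫₀^L g(θ) dθ − (L/N)·Σ_{i=1}^{N} g((i − 1/2)·L/N)| ≤ (π²·L^{κ+1})/(3·(2πN)^κ) · sup_{x ∈ ℝ} |g^{(κ)}(x)|. -/
open Real MeasureTheory

lemma rmr_coeff_step {T : ℝ} (hT : 0 < T) {f f' : ℝ → ℂ} (hd : ∀ x, HasDerivAt f (f' x) x)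
    (hc : Continuous f') (hp : f T = f 0) {n : ℤ} (hn : n ≠ 0) :
    ‖fourierCoeffOn hT f n‖ = T / (2 * π * |(n : ℝ)|) * ‖fourierCoeffOn hT f' n‖ := by
  rw [fourierCoeffOn_of_hasDerivAt hT hn (fun x _ => hd x) (hc.intervalIntegrable _ _), hp]
  simp only [sub_self, mul_zero, zero_sub, Complex.ofReal_zero, sub_zero]
  rw [norm_mul, norm_neg, norm_mul]
  simp only [norm_div, norm_mul, norm_neg, Complex.norm_I, Complex.norm_real, norm_one,
    Complex.norm_ofNat, Complex.norm_intCast, Real.norm_eq_abs, abs_of_pos hT,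
    abs_of_pos Real.pi_pos]
  ring

lemma rmr_coeff {T : ℝ} (hT : 0 < T) {D : ℕ → ℝ → ℂ}
    (hd : ∀ j x, HasDerivAt (D j) (D (j + 1) x) x)
    (hp : ∀ j, D j T = D j 0) {n : ℤ} (hn : n ≠ 0) (k : ℕ) :
    ‖fourierCoeffOn hT (D 0) n‖ =
      (T / (2 * π * |(n : ℝ)|)) ^ k * ‖fourierCoeffOn hT (D k) n‖ := by
  have hc : ∀ j, Continuous (D j) := fun j =>
    continuous_iff_continuousAt.2 fun x => (hd j x).continuousAt
  induction k with
  | zero => simp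
  | succ k ih =>
    rw [ih, rmr_coeff_step hT (hd k) (hc _) (hp k) hn]
    ring

lemma rmr_coeff_bound {T : ℝ} (hT : 0 < T) {f : ℝ → ℂ} {M : ℝ}
    (hM : ∀ x, ‖f x‖ ≤ M) (n : ℤ) : ‖fourierCoeffOn hT f n‖ ≤ M := by
  rw [fourierCoeffOn_eq_integral, norm_smul]
  have h := intervalIntegral.norm_integral_le_of_norm_le_const (a := 0) (b := T)
    (f := fun x => fourier (-n) (x : AddCircle (T - 0)) • f x) (C := M) (fun x _ => by
      rw [norm_smul, fourier_apply, Circle.norm_coe, one_mul]; exact hM x)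
  refine (mul_le_mul_of_nonneg_left h (norm_nonneg _)).trans (le_of_eq ?_)
  rw [sub_zero, abs_of_pos hT, Real.norm_of_nonneg (by positivity)]
  field_simp

lemma rmr_zeta : HasSum (fun n : ℤ => 1 / (n : ℝ) ^ 2) (π ^ 2 / 3) := by
  have := HasSum.of_nat_of_neg (f := fun n : ℤ => 1 / (n : ℝ) ^ 2) (g := π ^ 2 / 6)
    (g' := π ^ 2 / 6) (by simpa using hasSum_zeta_two) (by simpa using hasSum_zeta_two)
  have e : π ^ 2 / 6 + π ^ 2 / 6 - 1 / (((0 : ℤ) : ℝ)) ^ 2 = π ^ 2 / 3 := by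
    norm_num; ring
  rw [← e]
  exact this

lemma rmr_one {T : ℝ} (hT : 0 < T) {D : ℕ → ℝ → ℂ}
    (hd : ∀ j x, HasDerivAt (D j) (D (j + 1) x) x)
    (hp : ∀ j, D j T = D j 0) {k : ℕ} (hk : 2 ≤ k) {M : ℝ} (hM : ∀ x, ‖D k x‖ ≤ M)
    {x : ℝ} (hx : x ∈ Set.Ico 0 T) :
    ‖(∫ t in (0:ℝ)..T, D 0 t) - T * D 0 x‖ ≤ T * ((T / (2 * π)) ^ k * M * (π ^ 2 / 3)) := by
  have hM0 : 0 ≤ M := (norm_nonneg _).trans (hM 0)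
  have : Fact (0 < T) := ⟨hT⟩
  have hc : Continuous (D 0) := continuous_iff_continuousAt.2 fun x => (hd 0 x).continuousAt
  let F : C(AddCircle T, ℂ) := ⟨AddCircle.liftIco T 0 (D 0),
    AddCircle.liftIco_zero_continuous (hp 0).symm hc.continuousOn⟩
  have hF : ∀ n, fourierCoeff F n = fourierCoeffOn hT (D 0) n := by
    intro n
    have := fourierCoeff_liftIco_eq (T := T) (a := 0) (D 0) n
    simp only [zero_add] at this
    exact this
  have hb : ∀ n : ℤ, n ≠ 0 →
      ‖fourierCoeff F n‖ ≤ (T / (2 * π)) ^ k * M * (1 / (n : ℝ) ^ 2) := by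
    intro n hn
    rw [hF, rmr_coeff hT hd hp hn k]
    have h1 : (1 : ℝ) ≤ |(n : ℝ)| := by exact_mod_cast Int.one_le_abs hn
    calc _ ≤ (T / (2 * π * |(n : ℝ)|)) ^ k * M := by
          gcongr; exact rmr_coeff_bound hT hM n
      _ = (T / (2 * π)) ^ k * M * (1 / |(n : ℝ)| ^ k) := by
          rw [← div_div, div_pow]; ring
      _ ≤ (T / (2 * π)) ^ k * M * (1 / |(n : ℝ)| ^ 2) := by
          gcongr
      _ = _ := by rw [sq_abs]
  have hz := rmr_zeta.mul_left ((T / (2 * π)) ^ k * M)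
  have hs : Summable (fourierCoeff F) := by
    refine Summable.of_norm_bounded_eventually hz.summable ?_
    refine (Set.finite_singleton (0 : ℤ)).subset ?_
    intro n hn
    by_contra h
    exact hn (hb n h)
  have h1 := has_pointwise_sum_fourier_series_of_summable hs (x : AddCircle T)
  have h2 := h1.sub (hasSum_ite_eq (0 : ℤ) (fourierCoeff F 0))
  have h3 := h2.norm_le_of_bounded hz (fun n => by
    by_cases hn : n = 0
    · subst hn; simp
    · simp only [hn, if_false, sub_zero]
      rw [norm_smul, fourier_apply, Circle.norm_coe, mul_one]
      exact hb n hn)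
  have h4 : F (x : AddCircle T) = D 0 x := AddCircle.liftIco_zero_coe_apply hx
  have h5 : (∫ t in (0:ℝ)..T, D 0 t) = T * fourierCoeff F 0 := by
    rw [hF, fourierCoeffOn_eq_integral]
    have : (T : ℂ) ≠ 0 := by exact_mod_cast hT.ne'
    simp [this]
  rw [h5, ← mul_sub, norm_mul, norm_sub_rev, Complex.norm_real, Real.norm_of_nonneg hT.le, ← h4]
  gcongr

/-- Convergence rate of midpoint Riemann sums for smooth periodic functions. -/
theorem riemann_midpoint_rate (L : ℝ) (hL : 0 < L) (g : ℝ → ℂ)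
    (hg : ContDiff ℝ (⊤ : ℕ∞) g) (hper : ∀ x, g (x + L) = g x)
    (κ N : ℕ) (hκ : 2 ≤ κ) (hN : 1 ≤ N) :
    ‖(∫ θ in (0:ℝ)..L, g θ) -
        (((L / (N : ℝ)) : ℝ) : ℂ) * ∑ i ∈ Finset.Icc 1 N, g (((i : ℝ) - 1/2) * L / (N : ℝ))‖ ≤
      (π ^ 2 * L ^ (κ + 1)) / (3 * (2 * π * (N : ℝ)) ^ κ) *
        ⨆ x : ℝ, ‖iteratedDeriv κ g x‖ := by
  have hN0 : (0 : ℝ) < N := by exact_mod_cast hN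
  have hder : ∀ j x, HasDerivAt (iteratedDeriv j g) (iteratedDeriv (j + 1) g x) x := by
    intro j x
    rw [iteratedDeriv_succ]
    exact ((hg.differentiable_iteratedDeriv j (by exact_mod_cast ENat.natCast_lt_top j)) x).hasDerivAt
  have hcont : ∀ j, Continuous (iteratedDeriv j g) := fun j =>
    continuous_iff_continuousAt.2 fun x => (hder j x).continuousAt
  have hperj : ∀ j, Function.Periodic (iteratedDeriv j g) L := by
    intro j
    induction j with
    | zero => simpa using hper
    | succ j ih =>
      intro x
      have h1 := (hder j (x + L)).comp_add_const x L
      rw [show (fun x => iteratedDeriv j g (x + L)) = iteratedDeriv j g from funext ih] at h1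
      exact h1.unique (hder j x)
  have hbdd : BddAbove (Set.range fun x => ‖iteratedDeriv κ g x‖) := by
    obtain ⟨C, hC⟩ := isCompact_Icc.exists_bound_of_continuousOn
      (s := Set.Icc 0 L) (hcont κ).continuousOn
    refine ⟨C, ?_⟩
    rintro _ ⟨x, rfl⟩
    obtain ⟨y, hy, hxy⟩ := (hperj κ).exists_mem_Ico₀ hL x
    simp only [hxy]
    exact hC y ⟨hy.1, hy.2.le⟩
  set M := ⨆ x : ℝ, ‖iteratedDeriv κ g x‖ with hMdef
  set T : ℝ := L / N with hTdef
  have hT : 0 < T := by positivity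
  have hNT : (N : ℝ) * T = L := by rw [hTdef]; field_simp
  have key := rmr_one hT
    (D := fun j x => ∑ i ∈ Finset.range N, iteratedDeriv j g (x + i * T))
    (fun j x => HasDerivAt.fun_sum fun i _ => (hder j (x + i * T)).comp_add_const x (i * T))
    (fun j => by
      have h1 := Finset.sum_range_succ (fun i : ℕ => iteratedDeriv j g (0 + i * T)) N
      rw [Finset.sum_range_succ', hNT, hperj j 0] at h1
      simp only [Nat.cast_zero, zero_mul, add_zero] at h1
      rw [← add_right_cancel h1]
      refine Finset.sum_congr rfl fun i _ => ?_
      congr 1; push_cast; ring)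
    hκ (M := N * M) (fun x => by
      refine (norm_sum_le _ _).trans ((Finset.sum_le_card_nsmul (Finset.range N) _ M
        fun (i : ℕ) _ => le_ciSup hbdd (x + i * T)).trans ?_)
      simp)
    (x := T / 2) ⟨by positivity, by linarith⟩
  simp only [iteratedDeriv_zero] at key
  have hgc : Continuous g := hg.continuous
  have e1 : (∫ t in (0:ℝ)..T, ∑ i ∈ Finset.range N, g (t + i * T)) = ∫ θ in (0:ℝ)..L, g θ := by
    rw [intervalIntegral.integral_finsetSum]
    · have := intervalIntegral.sum_integral_adjacent_intervals (f := g) (μ := volume)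
        (a := fun i : ℕ => (i : ℝ) * T) (n := N) (fun i _ => hgc.intervalIntegrable _ _)
      simp only [hNT, Nat.cast_zero, zero_mul] at this
      rw [← this]
      refine Finset.sum_congr rfl fun i _ => ?_
      rw [intervalIntegral.integral_comp_add_right]
      congr 1 <;> (push_cast; ring)
    · intro i _
      exact (hgc.comp (by fun_prop)).intervalIntegrable _ _
  have e2 : ∑ i ∈ Finset.range N, g (T / 2 + i * T)
      = ∑ i ∈ Finset.Icc 1 N, g (((i : ℝ) - 1/2) * L / (N : ℝ)) := by
    rw [← Finset.Ico_add_one_right_eq_Icc, Finset.sum_Ico_eq_sum_range]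
    refine Finset.sum_congr rfl fun i _ => ?_
    congr 1; rw [hTdef]; push_cast; ring
  rw [e1, e2] at key
  refine key.trans (le_of_eq ?_)
  rw [hTdef, pow_succ, mul_pow _ (N : ℝ), div_pow, div_pow]
  field_simp
  ring
end

section
/- Let L > 0, let κ ≥ 2 be an integer and let M > 0. There exist C > 0 and N₀ such that for every integer N ≥ N₀, all points s₁, …, s_N ∈ [0, L) and s̃₁, …, s̃_N ∈ [0, L) with |s_i − (i − 1)·L/N| ≤ M·N^{−(κ+1)} and |s̃_i − (i − 1/2)·L/N| ≤ M·N^{−(κ+1)} for all i, and every z ∈ ℝ^N: (i) |(1/N)·(N^{−1}·Σ_{k=1}^{N} (Σ_{j=1}^{N} cot((s̃_k − s_j)·π/L)·z_j)²)^{1/2} − (N^{−1}·Σ_{i=1}^{N} (z_i − ⟨z⟩)²)^{1/2}| ≤ C·N^{1−κ}·‖z‖_{ℓ¹}, and (ii) (1/N)·(N^{−1}·Σ_{k=1}^{N} (Σ_{j=1, j≠k}^{N} cot((s_k − s_j)·π/L)·z_j)²)^{1/2} ≤ (N^{−1}·Σ_{i=1}^{N} (z_i − ⟨z⟩)²)^{1/2}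 + C·N^{1−κ}·‖z‖_{ℓ¹}. -/
open Real

/-- The mean value of a vector. -/
noncomputable def avg {N : ℕ} (z : Fin N → ℝ) : ℝ := (N : ℝ)⁻¹ * ∑ i, z i

/-- The normalized `ℓ¹` norm of a vector. -/
noncomputable def l1norm {N : ℕ} (z : Fin N → ℝ) : ℝ := (N : ℝ)⁻¹ * ∑ i, |z i|

lemma cw_rms_le {N : ℕ} (hN : 0 < N) (u v : Fin N → ℝ) (E : ℝ) (hE : 0 ≤ E)
    (h : ∀ k, |u k - v k| ≤ E) :
    Real.sqrt ((N : ℝ)⁻¹ * ∑ k, (u k) ^ 2) ≤ Real.sqrt ((N : ℝ)⁻¹ * ∑ k, (v k) ^ 2) + E := by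
  have hN' : (0:ℝ) < N := by exact_mod_cast hN
  set S := (N : ℝ)⁻¹ * ∑ k, (v k) ^ 2 with hS
  have hS0 : 0 ≤ S := by positivity
  have hcs : (N : ℝ)⁻¹ * ∑ k, |v k| ≤ Real.sqrt S := by
    apply Real.le_sqrt_of_sq_le
    have h1 := sq_sum_le_card_mul_sum_sq (s := (Finset.univ : Finset (Fin N))) (f := fun k => |v k|)
    simp only [sq_abs, Finset.card_univ, Fintype.card_fin] at h1
    rw [mul_pow, hS]
    calc ((N:ℝ)⁻¹)^2 * (∑ k, |v k|)^2 ≤ ((N:ℝ)⁻¹)^2 * (N * ∑ k, v k ^ 2) := by gcongr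
      _ = _ := by field_simp
  apply Real.sqrt_le_iff.mpr
  refine ⟨by positivity, ?_⟩
  have h2 : ∑ k, (u k)^2 ≤ ∑ k, ((v k)^2 + 2 * E * |v k| + E^2) := by
    apply Finset.sum_le_sum
    intro k _
    have h3 : |u k| ≤ |v k| + E := by
      have := abs_sub_abs_le_abs_sub (u k) (v k)
      linarith [h k]
    calc (u k)^2 = |u k|^2 := (sq_abs _).symm
      _ ≤ (|v k| + E)^2 := by gcongr
      _ = |v k|^2 + 2 * E * |v k| + E^2 := by ring
      _ = _ := by rw [sq_abs]
  calc (N : ℝ)⁻¹ * ∑ k, (u k) ^ 2 ≤ (N : ℝ)⁻¹ * ∑ k, ((v k)^2 + 2 * E * |v k| + E^2) := by gcongr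
    _ = S + 2 * E * ((N : ℝ)⁻¹ * ∑ k, |v k|) + E^2 := by
      rw [Finset.sum_add_distrib, Finset.sum_add_distrib, ← Finset.mul_sum, hS]
      simp only [Finset.sum_const, Finset.card_univ, Fintype.card_fin, nsmul_eq_mul]
      field_simp
    _ ≤ S + 2 * E * Real.sqrt S + E^2 := by gcongr
    _ = (Real.sqrt S + E)^2 := by
      rw [add_sq, Real.sq_sqrt hS0]; ring

lemma cw_sum_shift (N : ℕ) (f : ℤ → ℝ) (hf : ∀ m, f (m + N) = f m) (a : ℤ) :
    ∑ k ∈ Finset.range N, f (k + a) = ∑ k ∈ Finset.range N, f k := by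
  have step : ∀ b : ℤ, ∑ k ∈ Finset.range N, f (k + (b + 1)) = ∑ k ∈ Finset.range N, f (k + b) := by
    intro b
    have h1 := Finset.sum_range_succ (fun k : ℕ => f (k + b)) N
    rw [Finset.sum_range_succ'] at h1
    have h2 : f ((N:ℤ) + b) = f (((0:ℕ):ℤ) + b) := by
      rw [add_comm (N:ℤ) b, hf]; simp
    rw [h2] at h1
    have h3 := add_right_cancel h1
    rw [← h3]
    apply Finset.sum_congr rfl
    intro k _
    congr 1; push_cast; ring
  induction a using Int.induction_on with
  | zero => simp
  | succ i ih => rw [step, ih]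
  | pred i ih => rw [← step, ← ih]; simp

lemma cw_sum_odd (N : ℕ) (f : ℤ → ℝ) (hf : ∀ m, f (m + N) = f m) (c : ℤ)
    (hodd : ∀ m, f (-c - m) = - f m) : ∑ k ∈ Finset.range N, f k = 0 := by
  have h1 := Finset.sum_range_reflect (fun k : ℕ => f k) N
  have h2 : ∑ j ∈ Finset.range N, f ((N - 1 - j : ℕ) : ℤ) = - ∑ j ∈ Finset.range N, f (j + (1 - c)) := by
    rw [← Finset.sum_neg_distrib]
    apply Finset.sum_congr rfl
    intro j hj
    have hj' := Finset.mem_range.mp hj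
    rw [← hodd, ← hf (-c - _)]
    congr 1; omega
  rw [h2, cw_sum_shift N f hf] at h1
  linarith

lemma cw_col (N : ℕ) (f : ℤ → ℝ) (hf : ∀ m, f (m + N) = f m) (c : ℤ)
    (hodd : ∀ m, f (-c - m) = - f m) (j : ℤ) : ∑ k : Fin N, f ((k : ℕ) - j) = 0 := by
  rw [Fin.sum_univ_eq_sum_range (fun k : ℕ => f ((k:ℤ) - j)) N]
  have := cw_sum_shift N f hf (-j)
  rw [cw_sum_odd N f hf c hodd] at this
  simpa [sub_eq_add_neg] using this

lemma cw_row (N : ℕ) (f : ℤ → ℝ) (hf : ∀ m, f (m + N) = f m) (c : ℤ)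
    (hodd : ∀ m, f (-c - m) = - f m) (j : ℤ) : ∑ k : Fin N, f (j - (k : ℕ)) = 0 := by
  have := cw_col N f hf c hodd (-c - j + 2 * 0)
  have h2 := cw_col N f hf c hodd (j + c)
  rw [← neg_eq_zero, ← Finset.sum_neg_distrib, ← h2]
  apply Finset.sum_congr rfl
  intro k _
  rw [← hodd]; congr 1; ring

/-- Quadratic form of a Gram matrix with zero row sums. -/
lemma cw_gram {N : ℕ} (A : Fin N → Fin N → ℝ) (hrow : ∀ k, ∑ j, A k j = 0) (z : Fin N → ℝ) :
    ∑ k, (∑ j, A k j * z j) ^ 2 =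
      - (1/2) * ∑ j, ∑ l, (∑ k, A k j * A k l) * (z j - z l) ^ 2 := by
  have h1 : ∑ j, ∑ l, (∑ k, A k j * A k l) * (z j - z l) ^ 2
      = ∑ k, ∑ j, ∑ l, A k j * A k l * (z j - z l)^2 := by
    simp only [Finset.sum_mul]
    rw [Finset.sum_comm' (t' := Finset.univ) (s' := fun _ => Finset.univ) (by simp)]
    rw [Finset.sum_congr rfl (fun l _ => Finset.sum_comm)]
    rw [Finset.sum_comm]
    apply Finset.sum_congr rfl
    intro k _
    rw [Finset.sum_comm]
  rw [h1, Finset.mul_sum]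
  apply Finset.sum_congr rfl
  intro k _
  have h2 : ∑ j, ∑ l, A k j * A k l * (z j - z l)^2 =
      (∑ j, A k j * z j ^ 2) * (∑ l, A k l) + (∑ j, A k j) * (∑ l, A k l * z l ^ 2)
        - 2 * ((∑ j, A k j * z j) * (∑ l, A k l * z l)) := by
    simp only [Finset.sum_mul_sum]
    simp only [Finset.mul_sum, ← Finset.sum_add_distrib, ← Finset.sum_sub_distrib]
    refine Finset.sum_congr rfl fun j _ => Finset.sum_congr rfl fun l _ => by ring
  rw [h2, hrow]; ring

lemma cw_var {N : ℕ} (hN : 0 < N) (z : Fin N → ℝ) :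
    ∑ j, ∑ l, (z j - z l)^2 = 2 * N * ∑ i, (z i - avg z)^2 := by
  have hN' : (0:ℝ) < N := by exact_mod_cast hN
  have ha : ∑ i, z i = N * avg z := by unfold avg; field_simp
  have h0 : ∑ i, (z i - avg z) = 0 := by simp [ha]
  have h1 : ∀ j l, (z j - z l)^2 = (z j - avg z)^2 + (z l - avg z)^2
      - 2 * (z j - avg z) * (z l - avg z) := fun j l => by ring
  simp only [h1, Finset.sum_sub_distrib, Finset.sum_add_distrib, ← Finset.mul_sum, h0]
  simp [← Finset.mul_sum]
  ring

lemma cw_cot_eq (x : ℝ) : Real.cot x = Real.cos x / Real.sin x := Real.cot_eq_cos_div_sin x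

lemma cw_cot_neg (x : ℝ) : Real.cot (-x) = - Real.cot x := by
  simp [cw_cot_eq, neg_div', div_neg]

lemma cw_cot_pi (x : ℝ) : Real.cot (x + π) = Real.cot x := by
  simp [cw_cot_eq, Real.sin_add_pi, Real.cos_add_pi]

lemma cw_cot_mul (a b : ℝ) (ha : Real.sin a ≠ 0) (hb : Real.sin b ≠ 0) (hab : Real.sin (b - a) ≠ 0) :
    Real.cot a * Real.cot b = Real.cot (b - a) * (Real.cot a - Real.cot b) - 1 := by
  simp only [cw_cot_eq]
  have h : Real.cos a / Real.sin a - Real.cos b / Real.sin b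
      = Real.sin (b - a) / (Real.sin a * Real.sin b) := by
    rw [Real.sin_sub]; field_simp
  rw [h]
  have h2 : Real.cos (b-a) / Real.sin (b-a) * (Real.sin (b - a) / (Real.sin a * Real.sin b))
      = Real.cos (b-a) / (Real.sin a * Real.sin b) := by field_simp
  rw [h2, Real.cos_sub]; field_simp; ring

lemma cw_sin_lower (N : ℕ) (hN : 0 < N) (t : ℝ) (h1 : 1/2 ≤ |t|) (h2 : |t| ≤ N - 1/2) :
    1 / (N:ℝ) ≤ |Real.sin (t * π / N)| := by
  have hN' : (0:ℝ) < N := by exact_mod_cast hN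
  have hpi := Real.pi_pos
  have key : ∀ x : ℝ, 1/2 ≤ x → x ≤ N/2 → 1/(N:ℝ) ≤ Real.sin (x * π / N) := by
    intro x hx1 hx2
    have := Real.mul_le_sin (x := x * π / N) (by positivity) (by
      rw [div_le_iff₀ hN']; nlinarith)
    refine le_trans ?_ this
    have e : 2 / π * (x * π / N) = 2 * x / N := by field_simp
    rw [e]; gcongr; linarith
  have key2 : ∀ x : ℝ, 1/2 ≤ x → x ≤ N - 1/2 → 1/(N:ℝ) ≤ Real.sin (x * π / N) := by
    intro x hx1 hx2
    rcases le_total x (N/2) with h | h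
    · exact key x hx1 h
    · have := key (N - x) (by linarith) (by linarith)
      rwa [show (N - x) * π / N = π - x * π / N by field_simp, Real.sin_pi_sub] at this
  have h3 := key2 |t| h1 h2
  refine h3.trans ?_
  rcases abs_choice t with h | h <;> rw [h]
  · exact le_abs_self _
  · rw [show -t * π / N = -(t * π / N) by ring, Real.sin_neg]; exact neg_le_abs _

lemma cw_cot_diff (N : ℕ) (hN : 0 < N) (a b δ : ℝ) (hb : 1 / (N:ℝ) ≤ |Real.sin b|)
    (hab : |a - b| ≤ δ) (hδ : δ ≤ 1 / (2 * N)) :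
    |Real.cot a - Real.cot b| ≤ 2 * N^2 * δ := by
  have hN' : (0:ℝ) < N := by exact_mod_cast hN
  have hsin : |Real.sin a - Real.sin b| ≤ |a - b| := by
    simpa [Real.dist_eq] using Real.lipschitzWith_sin.dist_le_mul a b
  have ha : 1 / (2 * (N:ℝ)) ≤ |Real.sin a| := by
    have h1 := abs_sub_abs_le_abs_sub (Real.sin b) (Real.sin a)
    rw [abs_sub_comm] at h1
    have h2 : 1 / (N:ℝ) = 1 / (2 * N) + 1 / (2 * N) := by field_simp; norm_num
    linarith
  have pa : 0 < |Real.sin a| := lt_of_lt_of_le (by positivity) ha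
  have pb : 0 < |Real.sin b| := lt_of_lt_of_le (by positivity) hb
  have ha0 := abs_pos.mp pa
  have hb0 := abs_pos.mp pb
  have e : Real.cot a - Real.cot b = Real.sin (b - a) / (Real.sin a * Real.sin b) := by
    simp only [cw_cot_eq]
    rw [Real.sin_sub]; field_simp
  rw [e, abs_div, abs_mul, div_le_iff₀ (by positivity)]
  have h3 : |Real.sin (b - a)| ≤ δ := by
    refine (Real.abs_sin_le_abs).trans ?_
    rwa [abs_sub_comm]
  have hδ0 : 0 ≤ δ := (abs_nonneg _).trans hab
  calc |Real.sin (b - a)| ≤ δ := h3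
    _ = 2 * N^2 * δ * (1 / (2 * (N:ℝ)) * (1 / N)) := by field_simp
    _ ≤ _ := by gcongr

lemma cw_periodic (N : ℕ) (hN : 0 < N) (h : ℝ) (m : ℤ) :
    Real.cot ((((m + N : ℤ) : ℝ) + h) * π / N) = Real.cot (((m : ℝ) + h) * π / N) := by
  have hN' : (0:ℝ) < N := by exact_mod_cast hN
  rw [← cw_cot_pi (((m : ℝ) + h) * π / N)]
  congr 1; push_cast; field_simp; ring

lemma cw_lt {N : ℕ} (k j : Fin N) : |(((k:ℕ):ℝ) - ((j:ℕ):ℝ))| ≤ N - 1 := by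
  have h1 : ((k:ℕ):ℝ) + 1 ≤ N := by exact_mod_cast k.2
  have h2 : ((j:ℕ):ℝ) + 1 ≤ N := by exact_mod_cast j.2
  rw [abs_le]
  constructor <;> linarith [(Nat.cast_nonneg (k:ℕ) : (0:ℝ) ≤ _), (Nat.cast_nonneg (j:ℕ) : (0:ℝ) ≤ _)]

lemma cw_half_lower {N : ℕ} (hN : 0 < N) (k j : Fin N) :
    1 / (N:ℝ) ≤ |Real.sin ((((k:ℕ):ℝ) - ((j:ℕ):ℝ) + 1/2) * π / N)| := by
  apply cw_sin_lower N hN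
  · rcases le_or_gt (j:ℕ) (k:ℕ) with h | h
    · have : ((j:ℕ):ℝ) ≤ (k:ℕ) := by exact_mod_cast h
      rw [abs_of_nonneg] <;> linarith
    · have : ((k:ℕ):ℝ) + 1 ≤ (j:ℕ) := by exact_mod_cast h
      rw [abs_of_nonpos] <;> linarith
  · have := abs_le.mp (cw_lt k j)
    rw [abs_le]; constructor <;> linarith

lemma cw_int_lower {N : ℕ} (hN : 0 < N) (k j : Fin N) (hkj : k ≠ j) :
    1 / (N:ℝ) ≤ |Real.sin ((((k:ℕ):ℝ) - ((j:ℕ):ℝ)) * π / N)| := by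
  apply cw_sin_lower N hN
  · have hne : (k:ℕ) ≠ (j:ℕ) := fun h => hkj (Fin.ext h)
    rcases lt_or_gt_of_ne hne with h | h
    · have : ((k:ℕ):ℝ) + 1 ≤ (j:ℕ) := by exact_mod_cast h
      rw [abs_of_nonpos] <;> linarith
    · have : ((j:ℕ):ℝ) + 1 ≤ (k:ℕ) := by exact_mod_cast h
      rw [abs_of_nonneg] <;> linarith
  · linarith [cw_lt k j]

/-- the half-shifted exact identity -/
lemma cw_exact_half {N : ℕ} (hN : 0 < N) (z : Fin N → ℝ) :
    ∑ k : Fin N, (∑ j : Fin N, Real.cot ((((k:ℕ):ℝ) - ((j:ℕ):ℝ) + 1/2) * π / N) * z j)^2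
      = N^2 * ∑ i, (z i - avg z)^2 := by
  have hN' : (0:ℝ) < N := by exact_mod_cast hN
  set f : ℤ → ℝ := fun m => Real.cot (((m : ℝ) + 1/2) * π / N) with hf
  have hper : ∀ m, f (m + N) = f m := fun m => cw_periodic N hN (1/2) m
  have hodd : ∀ m, f (-1 - m) = - f m := by
    intro m
    simp only [hf]; rw [← cw_cot_neg]; congr 1; push_cast; ring
  have hfe : ∀ k j : Fin N, Real.cot ((((k:ℕ):ℝ) - ((j:ℕ):ℝ) + 1/2) * π / N)
      = f ((k:ℕ) - (j:ℕ)) := by intro k j; simp [hf]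
  have hsin : ∀ k j : Fin N, Real.sin ((((k:ℕ):ℝ) - ((j:ℕ):ℝ) + 1/2) * π / N) ≠ 0 :=
    fun k j => abs_pos.mp (lt_of_lt_of_le (by positivity) (cw_half_lower hN k j))
  have hsin0 : ∀ k j : Fin N, k ≠ j → Real.sin ((((k:ℕ):ℝ) - ((j:ℕ):ℝ)) * π / N) ≠ 0 :=
    fun k j hkj => abs_pos.mp (lt_of_lt_of_le (by positivity) (cw_int_lower hN k j hkj))
  simp only [hfe]
  rw [cw_gram _ (fun k => cw_row N f hper 1 hodd _)]
  have hG : ∀ j l : Fin N, (∑ k : Fin N, f ((k:ℕ) - (j:ℕ)) * f ((k:ℕ) - (l:ℕ))) * (z j - z l)^2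
      = - N * (z j - z l)^2 := by
    intro j l
    rcases eq_or_ne j l with rfl | hjl
    · simp
    congr 1
    have : ∀ k : Fin N, f ((k:ℕ) - (j:ℕ)) * f ((k:ℕ) - (l:ℕ)) =
        Real.cot ((((j:ℕ):ℝ) - ((l:ℕ):ℝ)) * π / N) * (f ((k:ℕ) - (j:ℕ)) - f ((k:ℕ) - (l:ℕ))) - 1 := by
      intro k
      rw [← hfe, ← hfe]
      have e : (((j:ℕ):ℝ) - ((l:ℕ):ℝ)) * π / N = (((k:ℕ):ℝ) - ((l:ℕ):ℝ) + 1/2) * π / N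
        - (((k:ℕ):ℝ) - ((j:ℕ):ℝ) + 1/2) * π / N := by ring
      rw [cw_cot_mul _ _ (hsin k j) (hsin k l) (by rw [← e]; exact hsin0 j l hjl), e]
    simp only [this]
    rw [Finset.sum_sub_distrib, ← Finset.mul_sum, Finset.sum_sub_distrib,
      cw_col N f hper 1 hodd, cw_col N f hper 1 hodd]
    simp
  simp only [hG, ← Finset.mul_sum]
  rw [cw_var hN]; ring

/-- the unshifted exact inequality -/
lemma cw_exact_int {N : ℕ} (hN : 0 < N) (z : Fin N → ℝ) :
    ∑ k : Fin N, (∑ j : Fin N, Real.cot ((((k:ℕ):ℝ) - ((j:ℕ):ℝ)) * π / N) * z j)^2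
      ≤ N^2 * ∑ i, (z i - avg z)^2 := by
  have hN' : (0:ℝ) < N := by exact_mod_cast hN
  set f : ℤ → ℝ := fun m => Real.cot ((m : ℝ) * π / N) with hf
  have hper : ∀ m, f (m + N) = f m := fun m => by
    simpa [hf] using cw_periodic N hN 0 m
  have hodd : ∀ m, f (-0 - m) = - f m := by
    intro m
    simp only [hf]; rw [← cw_cot_neg]; congr 1; push_cast; ring
  have hf0 : f 0 = 0 := by simp [hf, cw_cot_eq]
  have hfe : ∀ k j : Fin N, Real.cot ((((k:ℕ):ℝ) - ((j:ℕ):ℝ)) * π / N)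
      = f ((k:ℕ) - (j:ℕ)) := by intro k j; simp [hf]
  have hsin0 : ∀ k j : Fin N, k ≠ j → Real.sin ((((k:ℕ):ℝ) - ((j:ℕ):ℝ)) * π / N) ≠ 0 :=
    fun k j hkj => abs_pos.mp (lt_of_lt_of_le (by positivity) (cw_int_lower hN k j hkj))
  simp only [hfe]
  rw [cw_gram _ (fun k => cw_row N f hper 0 hodd _)]
  have hG : ∀ j l : Fin N, - N * (z j - z l)^2 ≤
      (∑ k : Fin N, f ((k:ℕ) - (j:ℕ)) * f ((k:ℕ) - (l:ℕ))) * (z j - z l)^2 := by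
    intro j l
    rcases eq_or_ne j l with rfl | hjl
    · simp
    apply mul_le_mul_of_nonneg_right _ (sq_nonneg _)
    have : ∀ k : Fin N, f ((j:ℕ) - (l:ℕ)) * (f ((k:ℕ) - (j:ℕ)) - f ((k:ℕ) - (l:ℕ))) - 1
        ≤ f ((k:ℕ) - (j:ℕ)) * f ((k:ℕ) - (l:ℕ)) := by
      intro k
      rcases eq_or_ne k j with rfl | hkj
      · simp only [sub_self, hf0]
        nlinarith [sq_nonneg (f ((k:ℕ) - (l:ℕ)))]
      rcases eq_or_ne k l with rfl | hkl
      · have e : f ((k:ℕ) - (j:ℕ)) = - f ((j:ℕ) - (k:ℕ)) := by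
          rw [← hodd]; congr 1; ring
        simp only [sub_self, hf0, e]
        nlinarith [sq_nonneg (f ((j:ℕ) - (k:ℕ)))]
      rw [← hfe, ← hfe, ← hfe]
      have e : (((j:ℕ):ℝ) - ((l:ℕ):ℝ)) * π / N = (((k:ℕ):ℝ) - ((l:ℕ):ℝ)) * π / N
        - (((k:ℕ):ℝ) - ((j:ℕ):ℝ)) * π / N := by ring
      rw [cw_cot_mul _ _ (hsin0 k j hkj) (hsin0 k l hkl) (by rw [← e]; exact hsin0 j l hjl), e]
    refine le_trans (le_of_eq ?_) (Finset.sum_le_sum fun k _ => this k)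
    rw [Finset.sum_sub_distrib, ← Finset.mul_sum, Finset.sum_sub_distrib,
      cw_col N f hper 0 hodd, cw_col N f hper 0 hodd]
    simp
  have h1 := Finset.sum_le_sum fun j (_ : j ∈ Finset.univ) =>
    Finset.sum_le_sum fun l (_ : l ∈ Finset.univ) => hG j l
  simp only [← Finset.mul_sum] at h1
  rw [cw_var hN] at h1
  linarith

lemma cw_perturb {N : ℕ} (hN : 0 < N) (A B : Fin N → Fin N → ℝ) (D : ℝ) (hD : 0 ≤ D)
    (h : ∀ k j, |A k j - B k j| ≤ D) (z : Fin N → ℝ) :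
    (N : ℝ)⁻¹ * Real.sqrt ((N : ℝ)⁻¹ * ∑ k, (∑ j, A k j * z j) ^ 2)
      ≤ (N : ℝ)⁻¹ * Real.sqrt ((N : ℝ)⁻¹ * ∑ k, (∑ j, B k j * z j) ^ 2) + D * l1norm z := by
  have h1 := cw_rms_le hN (fun k => ∑ j, A k j * z j) (fun k => ∑ j, B k j * z j)
    (D * ∑ j, |z j|) (by positivity) (by
      intro k
      rw [← Finset.sum_sub_distrib, Finset.mul_sum]
      refine (Finset.abs_sum_le_sum_abs _ _).trans (Finset.sum_le_sum fun j _ => ?_)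
      rw [← sub_mul, abs_mul]
      exact mul_le_mul_of_nonneg_right (h k j) (abs_nonneg _))
  have h2 := mul_le_mul_of_nonneg_left h1 (by positivity : (0:ℝ) ≤ (N:ℝ)⁻¹)
  refine h2.trans (le_of_eq ?_)
  unfold l1norm; ring

lemma cw_scale {N : ℕ} (hN : 0 < N) (V : ℝ) :
    (N : ℝ)⁻¹ * Real.sqrt ((N : ℝ)⁻¹ * (N ^ 2 * V)) = Real.sqrt ((N : ℝ)⁻¹ * V) := by
  have hN' : (0:ℝ) < N := by exact_mod_cast hN
  rw [show (N : ℝ)⁻¹ * (N ^ 2 * V) = N ^ 2 * ((N : ℝ)⁻¹ * V) by ring,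
    Real.sqrt_mul (by positivity), Real.sqrt_sq hN'.le]
  field_simp

lemma cw_entry (L : ℝ) (hL : 0 < L) (κ : ℕ) (hκ : 2 ≤ κ) (M : ℝ) (hM : 0 < M) (N : ℕ)
    (hN : 0 < N) (hNL : 4 * M * π / L ≤ N) (x y p q : ℝ)
    (hx : |x - p * L / N| ≤ M / (N:ℝ) ^ (κ + 1)) (hy : |y - q * L / N| ≤ M / (N:ℝ) ^ (κ + 1))
    (hs : 1 / (N:ℝ) ≤ |Real.sin ((p - q) * π / N)|) :
    |Real.cot ((x - y) * π / L) - Real.cot ((p - q) * π / N)| ≤ 4 * M * π / L / (N:ℝ) ^ (κ - 1) := by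
  have hN' : (0:ℝ) < N := by exact_mod_cast hN
  have hN1 : (1:ℝ) ≤ N := by exact_mod_cast hN
  have hpi := Real.pi_pos
  have hpow : (N:ℝ) ^ (κ + 1) = N ^ (κ - 1) * N ^ 2 := by
    rw [← pow_add]; congr 1; omega
  have h := cw_cot_diff N hN ((x - y) * π / L) ((p - q) * π / N)
    (2 * (M / (N:ℝ) ^ (κ + 1)) * (π / L)) hs (by
      have e : (x - y) * π / L - (p - q) * π / N
          = ((x - p * L / N) - (y - q * L / N)) * (π / L) := by field_simp; ring
      rw [e, abs_mul, abs_of_pos (by positivity : 0 < π / L)]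
      gcongr
      refine (abs_sub _ _).trans ?_
      linarith) (by
      have h2 : (N:ℝ)^2 ≤ N ^ (κ + 1) := pow_le_pow_right₀ hN1 (by omega)
      calc 2 * (M / (N:ℝ) ^ (κ + 1)) * (π / L) ≤ 2 * (M / (N:ℝ) ^ 2) * (π / L) := by gcongr
        _ = (4 * M * π / L) / (2 * N^2) := by field_simp; norm_num
        _ ≤ N / (2 * N^2) := by gcongr
        _ = _ := by field_simp)
  refine h.trans (le_of_eq ?_)
  rw [hpow]; field_simp; norm_num

/-- Approximate `ℓ²` identities for cotangent sums over a well distributed mesh. -/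
theorem cot_l2_well_distributed (L : ℝ) (hL : 0 < L) (κ : ℕ) (hκ : 2 ≤ κ) (M : ℝ) (hM : 0 < M) :
    ∃ C > 0, ∃ N₀ : ℕ, ∀ N : ℕ, N₀ ≤ N → ∀ s st : Fin N → ℝ,
      (∀ i : Fin N, s i ∈ Set.Ico (0:ℝ) L ∧
        |s i - ((i : ℕ) : ℝ) * L / (N : ℝ)| ≤ M / (N : ℝ) ^ (κ + 1)) →
      (∀ i : Fin N, st i ∈ Set.Ico (0:ℝ) L ∧
        |st i - (((i : ℕ) : ℝ) + 1/2) * L / (N : ℝ)| ≤ M / (N : ℝ) ^ (κ + 1)) →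
      ∀ z : Fin N → ℝ,
      (|(N : ℝ)⁻¹ * Real.sqrt ((N : ℝ)⁻¹ *
            ∑ k : Fin N, (∑ j : Fin N, Real.cot ((st k - s j) * π / L) * z j) ^ 2)
          - Real.sqrt ((N : ℝ)⁻¹ * ∑ i : Fin N, (z i - avg z) ^ 2)|
        ≤ C / (N : ℝ) ^ (κ - 1) * l1norm z) ∧
      ((N : ℝ)⁻¹ * Real.sqrt ((N : ℝ)⁻¹ *
            ∑ k : Fin N, (∑ j ∈ Finset.univ.erase k, Real.cot ((s k - s j) * π / L) * z j) ^ 2)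
        ≤ Real.sqrt ((N : ℝ)⁻¹ * ∑ i : Fin N, (z i - avg z) ^ 2)
          + C / (N : ℝ) ^ (κ - 1) * l1norm z) := by
  refine ⟨4 * M * π / L, by have := Real.pi_pos; positivity, ⌈4 * M * π / L⌉₊ + 1, ?_⟩
  intro N hN0 s st hs hst z
  have hN : 0 < N := by omega
  have hNL : 4 * M * π / L ≤ N :=
    (Nat.le_ceil _).trans (by exact_mod_cast (by omega : ⌈4 * M * π / L⌉₊ ≤ N))
  have hD : 0 ≤ 4 * M * π / L / (N:ℝ) ^ (κ - 1) := by have := Real.pi_pos; positivity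
  constructor
  · have hent : ∀ k j : Fin N, |Real.cot ((st k - s j) * π / L)
        - Real.cot ((((k:ℕ):ℝ) - ((j:ℕ):ℝ) + 1/2) * π / N)| ≤ 4 * M * π / L / (N:ℝ) ^ (κ - 1) := by
      intro k j
      have e : ((k:ℕ):ℝ) - ((j:ℕ):ℝ) + 1/2 = (((k:ℕ):ℝ) + 1/2) - ((j:ℕ):ℝ) := by ring
      have h1 := cw_half_lower hN k j
      rw [e] at h1 ⊢
      exact cw_entry L hL κ hκ M hM N hN hNL _ _ _ _ (hst k).2 (hs j).2 h1
    have h1 := cw_perturb hN _ _ _ hD hent z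
    have h2 := cw_perturb hN _ _ _ hD (fun k j => by rw [abs_sub_comm]; exact hent k j) z
    rw [cw_exact_half hN, cw_scale hN] at h1 h2
    rw [abs_le]; constructor <;> linarith
  · have hent : ∀ k j : Fin N, |Real.cot ((s k - s j) * π / L)
        - Real.cot ((((k:ℕ):ℝ) - ((j:ℕ):ℝ)) * π / N)| ≤ 4 * M * π / L / (N:ℝ) ^ (κ - 1) := by
      intro k j
      rcases eq_or_ne k j with rfl | hkj
      · simpa using hD
      exact cw_entry L hL κ hκ M hM N hN hNL _ _ _ _ (hs k).2 (hs j).2 (cw_int_lower hN k j hkj)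
    have h1 := cw_perturb hN _ _ _ hD hent z
    have h2 : ∀ k : Fin N, ∑ j ∈ Finset.univ.erase k, Real.cot ((s k - s j) * π / L) * z j
        = ∑ j, Real.cot ((s k - s j) * π / L) * z j := by
      intro k
      apply Finset.sum_erase
      simp [cw_cot_eq]
    simp only [h2]
    have h3 : (N : ℝ)⁻¹ * Real.sqrt ((N : ℝ)⁻¹ * ∑ k : Fin N, (∑ j : Fin N,
        Real.cot ((((k:ℕ):ℝ) - ((j:ℕ):ℝ)) * π / N) * z j)^2)
        ≤ Real.sqrt ((N : ℝ)⁻¹ * ∑ i : Fin N, (z i - avg z) ^ 2) := by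
      rw [← cw_scale hN (∑ i : Fin N, (z i - avg z) ^ 2)]
      exact mul_le_mul_of_nonneg_left (Real.sqrt_le_sqrt
        (mul_le_mul_of_nonneg_left (cw_exact_int hN z) (by positivity))) (by positivity)
    linarith
end

section
/- Assume the curve setup and let a well distributed mesh with parameters κ ≥ 2 and M > 0 be given. Then there exist C > 0 and N₀ such that for every N ≥ N₀ (in particular the matrices A_N, Ã_N, B_N, B̃_N are well defined) and every z ∈ ℝ^N: (1/N)·(‖A_N z‖_{ℓ^p} + ‖Ã_N z‖_{ℓ^p}) ≤ C·‖z‖_{ℓ¹} for every p ∈ [1, ∞], and (1/N)·(‖B_N z‖_{ℓ²} + ‖B̃_N z‖_{ℓ²}) ≤ C·‖z‖_{ℓ²}. -/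
open Real MeasureTheory

/-- Dot product of two points of the plane `ℝ² ≃ ℂ`. -/
noncomputable def dotR (z w : ℂ) : ℝ := z.re * w.re + z.im * w.im

/-- The unit normal vector `n(s) = (l₂'(s), -l₁'(s))` of a curve `l`. -/
noncomputable def normalv (l : ℝ → ℂ) (s : ℝ) : ℂ := -Complex.I * deriv l s

/-- The discretized double layer matrix with rows evaluated at the points `a` and
columns at the points `b`. -/
noncomputable def Amat (l : ℝ → ℂ) {N : ℕ} (a b : Fin N → ℝ) : Matrix (Fin N) (Fin N) ℝ :=
  Matrix.of fun i j => dotR (l (a i) - l (b j)) (normalv l (a i)) / ‖l (a i) - l (b j)‖ ^ 2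

/-- The discretized singular (tangential) matrix with rows evaluated at the points `a`
and columns at the points `b`. -/
noncomputable def Bmat (l : ℝ → ℂ) {N : ℕ} (a b : Fin N → ℝ) : Matrix (Fin N) (Fin N) ℝ :=
  Matrix.of fun i j => dotR (l (a i) - l (b j)) (deriv l (a i)) / ‖l (a i) - l (b j)‖ ^ 2

/-- The normalized `ℓ²` norm of a vector. -/
noncomputable def l2norm {N : ℕ} (z : Fin N → ℝ) : ℝ := Real.sqrt ((N : ℝ)⁻¹ * ∑ i, z i ^ 2)


noncomputable def ct (x : ℝ) : ℝ := Real.cos x / Real.sin x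

lemma ct_add_int (x : ℝ) (n : ℤ) : ct (x + n * π) = ct x := by
  unfold ct
  rw [Real.sin_add_int_mul_pi, Real.cos_add_int_mul_pi]
  have : ((-1:ℝ)^n) ≠ 0 := zpow_ne_zero _ (by norm_num)
  rw [mul_div_mul_left _ _ this]

lemma sin_lower (t : ℝ) : 2 * |t - round t| ≤ |Real.sin (π * t)| := by
  have h1 : |t - round t| ≤ 1/2 := abs_sub_round t
  have h2 : π * t = π * (t - round t) + (round t : ℤ) * π := by ring
  rw [h2, Real.sin_add_int_mul_pi, abs_mul, abs_zpow]
  simp only [abs_neg, abs_one, one_zpow, one_mul]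
  have h3 := Real.mul_abs_le_abs_sin (x := π * (t - round t)) (by
    rw [abs_mul, abs_of_pos Real.pi_pos]; nlinarith [Real.pi_pos])
  rw [abs_mul, abs_of_pos Real.pi_pos] at h3
  have : 2 / π * (π * |t - round t|) = 2 * |t - round t| := by
    field_simp
  linarith

lemma taylor1 (l : ℝ → ℂ) (hd : Differentiable ℝ l) (hd2 : Differentiable ℝ (deriv l)) (K : ℝ)
    (hK : ∀ s, ‖deriv (deriv l) s‖ ≤ K) (a b : ℝ) :
    ‖l a - l b - ((a - b : ℝ) : ℂ) * deriv l a‖ ≤ K * |a - b| ^ 2 := by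
  have hK0 : 0 ≤ K := (norm_nonneg _).trans (hK 0)
  have hlip : ∀ x y, ‖deriv l x - deriv l y‖ ≤ K * |x - y| := by
    intro x y
    have := Convex.norm_image_sub_le_of_norm_deriv_le (f := deriv l) (s := Set.univ) (C := K)
      (fun x _ => hd2 x) (fun x _ => hK x) convex_univ (Set.mem_univ y) (Set.mem_univ x)
    simpa [Real.norm_eq_abs] using this
  have hder : ∀ x, HasDerivAt (fun t : ℝ => l t - ((t : ℝ) : ℂ) * deriv l a)
      (deriv l x - deriv l a) x := by
    intro x
    have h1 := (hd x).hasDerivAt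
    have h2 : HasDerivAt (fun t : ℝ => ((t : ℝ) : ℂ) * deriv l a) (1 * deriv l a) x :=
      (Complex.ofRealCLM.hasDerivAt (x := x)).mul_const _
    rw [one_mul] at h2
    exact h1.sub h2
  have := Convex.norm_image_sub_le_of_norm_hasDerivWithin_le
    (f := fun t : ℝ => l t - ((t : ℝ) : ℂ) * deriv l a) (s := Set.uIcc a b) (C := K * |a - b|)
    (fun x _ => (hder x).hasDerivWithinAt) (fun x hx => by
      refine (hlip x a).trans ?_
      apply mul_le_mul_of_nonneg_left _ hK0
      have := Set.abs_sub_left_of_mem_uIcc hx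
      rw [abs_sub_comm a b]; exact this)
    (convex_uIcc a b) Set.right_mem_uIcc Set.left_mem_uIcc
  simp only [Real.norm_eq_abs] at this
  calc _ = ‖l a - ↑a * deriv l a - (l b - ↑b * deriv l a)‖ := by
        congr 1; push_cast; ring
    _ ≤ _ := this
    _ = _ := by ring

lemma per_int (L : ℝ) (l : ℝ → ℂ) (hper : ∀ s, l (s + L) = l s) (s : ℝ) (n : ℤ) :
    l (s + n * L) = l s := by
  have h : Function.Periodic l L := hper
  exact h.int_mul n s

lemma chord_arc (L : ℝ) (hL : 0 < L) (l : ℝ → ℂ)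
    (hc : Continuous l) (hper : ∀ s, l (s + L) = l s)
    (harc : ∀ s, ‖deriv l s‖ = 1) (hinj : Set.InjOn l (Set.Ico 0 L)) (K : ℝ) (hK : 0 < K)
    (hT : ∀ a b, ‖l a - l b - ((a - b : ℝ) : ℂ) * deriv l a‖ ≤ K * |a - b| ^ 2) :
    ∃ c > 0, ∀ a b, |a - b| ≤ L / 2 → c * |a - b| ≤ ‖l a - l b‖ := by
  have hinj' : ∀ a b, l a = l b → ∃ n : ℤ, a - b = n * L := by
    intro a b hab
    have ha : l (toIcoMod hL 0 a) = l a := by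
      have := per_int L l hper a (-toIcoDiv hL 0 a)
      rw [← this]; congr 1
      simp only [toIcoMod, zsmul_eq_mul]; push_cast; ring
    have hb : l (toIcoMod hL 0 b) = l b := by
      have := per_int L l hper b (-toIcoDiv hL 0 b)
      rw [← this]; congr 1
      simp only [toIcoMod, zsmul_eq_mul]; push_cast; ring
    have ma := toIcoMod_mem_Ico hL 0 a
    have mb := toIcoMod_mem_Ico hL 0 b
    rw [zero_add] at ma mb
    have := hinj ma mb (by rw [ha, hb, hab])
    refine ⟨toIcoDiv hL 0 a - toIcoDiv hL 0 b, ?_⟩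
    simp only [toIcoMod, zsmul_eq_mul] at this
    push_cast; linarith
  set S : Set (ℝ × ℝ) := Set.Icc 0 L ×ˢ (Set.Icc (-(L/2)) (L/2) ∩ {u | 1 / (2 * K) ≤ |u|}) with hS
  have hScomp : IsCompact S := by
    apply isCompact_Icc.prod
    apply isCompact_Icc.inter_right
    exact isClosed_le continuous_const continuous_abs
  have hfc : Continuous (fun p : ℝ × ℝ => ‖l p.1 - l (p.1 - p.2)‖) := by fun_prop
  have hfar : ∃ c > 0, ∀ p ∈ S, c ≤ ‖l p.1 - l (p.1 - p.2)‖ := by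
    rcases S.eq_empty_or_nonempty with he | hne
    · exact ⟨1, one_pos, by simp [he]⟩
    · obtain ⟨p, hp, hmin⟩ := hScomp.exists_isMinOn hne hfc.continuousOn
      refine ⟨_, ?_, fun q hq => hmin hq⟩
      rw [gt_iff_lt, norm_pos_iff, sub_ne_zero]
      intro h
      obtain ⟨n, hn⟩ := hinj' _ _ h
      obtain ⟨-, ⟨h1, h2⟩, h3⟩ := hp
      simp only [Set.mem_ofPred_eq, sub_sub_cancel] at h3 hn
      have hn0 : n = 0 := by
        by_contra hne
        have h5 : |p.2| ≤ L / 2 := abs_le.2 ⟨h1, h2⟩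
        have h6 : (1:ℝ) ≤ |(n:ℝ)| := by exact_mod_cast Int.one_le_abs hne
        rw [hn, abs_mul, abs_of_pos hL] at h5
        nlinarith
      rw [hn, hn0] at h3
      have : 0 < 1 / (2 * K) := by positivity
      simp only [Int.cast_zero, zero_mul, abs_zero] at h3
      linarith
  obtain ⟨c, hc0, hcS⟩ := hfar
  refine ⟨min (1/2) (c / L), lt_min (by norm_num) (by positivity), fun a b hab => ?_⟩
  by_cases hu : |a - b| < 1 / (2 * K)
  · have h1 := hT a b
    have h2 : ‖((a - b : ℝ) : ℂ) * deriv l a‖ = |a - b| := by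
      rw [norm_mul, harc, mul_one, Complex.norm_real, Real.norm_eq_abs]
    have h3 : ‖((a - b : ℝ) : ℂ) * deriv l a‖ ≤ ‖l a - l b‖ +
        ‖l a - l b - ((a - b : ℝ) : ℂ) * deriv l a‖ := by
      have := norm_sub_le (l a - l b) (l a - l b - ((a - b : ℝ) : ℂ) * deriv l a)
      simpa using this
    have h4 : K * |a - b| ^ 2 ≤ |a - b| / 2 := by
      rw [lt_div_iff₀ (by positivity)] at hu
      nlinarith [abs_nonneg (a - b)]
    have h5 : min (1/2) (c / L) * |a - b| ≤ 1/2 * |a - b| := by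
      gcongr; exact min_le_left _ _
    linarith
  · push Not at hu
    have ma := toIcoMod_mem_Ico hL 0 a
    rw [zero_add] at ma
    have h1 := hcS (toIcoMod hL 0 a, a - b) ⟨⟨ma.1, ma.2.le⟩, abs_le.1 hab, hu⟩
    have ha : l (toIcoMod hL 0 a) = l a := by
      have := per_int L l hper a (-toIcoDiv hL 0 a)
      rw [← this]; congr 1
      simp only [toIcoMod, zsmul_eq_mul]; push_cast; ring
    have hb : l (toIcoMod hL 0 a - (a - b)) = l b := by
      have := per_int L l hper b (-toIcoDiv hL 0 a)
      rw [← this]; congr 1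
      simp only [toIcoMod, zsmul_eq_mul]; push_cast; ring
    simp only [ha, hb] at h1
    have h5 : min (1/2) (c / L) * |a - b| ≤ c / L * L := by
      gcongr
      · exact min_le_right _ _
      · linarith
    rw [div_mul_cancel₀ _ hL.ne'] at h5
    linarith

lemma ct_near (x : ℝ) (hx : |x| ≤ π / 2) : |1 / x - ct x| ≤ 4 := by
  by_cases h0 : x = 0
  · subst h0; simp [ct]
  have hxp : 0 < |x| := abs_pos.2 h0
  have h1 := Real.mul_abs_le_abs_sin hx
  have hs : Real.sin x ≠ 0 := by
    intro h; rw [h] at h1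
    have : 0 < 2 / π * |x| := by positivity
    simp at h1; linarith
  have e : 1 / x - ct x = (Real.sin x - x * Real.cos x) / (x * Real.sin x) := by
    unfold ct; field_simp
  rw [e, abs_div, abs_mul, div_le_iff₀ (by positivity)]
  have h3 : |Real.sin x - x * Real.cos x| ≤ 2 * |x| ^ 2 := by
    have hc : |1 - Real.cos x| ≤ |x| := by
      have h := Real.abs_cos_sub_cos_le 0 x
      simpa using h
    have hs2 : |Real.sin x - x| ≤ |x| ^ 2 := by
      have hd : ∀ y : ℝ, HasDerivAt (fun t => Real.sin t - t) (Real.cos y - 1) y := fun y =>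
        (Real.hasDerivAt_sin y).sub (hasDerivAt_id y)
      have hcy : ∀ y : ℝ, |Real.cos y - 1| ≤ |y| := by
        intro y
        have h := Real.abs_cos_sub_cos_le y 0
        simpa using h
      have := Convex.norm_image_sub_le_of_norm_hasDerivWithin_le
        (f := fun t : ℝ => Real.sin t - t) (s := Set.uIcc 0 x) (C := |x|)
        (fun y _ => (hd y).hasDerivWithinAt) (fun y hy => by
          refine (hcy y).trans ?_
          have := Set.abs_sub_left_of_mem_uIcc hy
          simpa using this)
        (convex_uIcc 0 x) Set.left_mem_uIcc Set.right_mem_uIcc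
      simp only [Real.norm_eq_abs, Real.sin_zero, sub_zero] at this
      rw [sq]; exact this
    have e : Real.sin x - x * Real.cos x = (Real.sin x - x) + x * (1 - Real.cos x) := by ring
    rw [e]
    refine (abs_add_le _ _).trans ?_
    rw [abs_mul]; nlinarith
  have h4 : (1:ℝ)/2 ≤ 2 / π := by
    rw [div_le_div_iff₀ (by norm_num) Real.pi_pos]; linarith [Real.pi_le_four]
  have h5 : 1/2 * |x| ≤ |Real.sin x| := le_trans (by gcongr) h1
  nlinarith

lemma kernel_bound (L : ℝ) (hL : 0 < L) (l : ℝ → ℂ)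
    (hsm : ContDiff ℝ (⊤ : ℕ∞) l) (hper : ∀ s, l (s + L) = l s)
    (harc : ∀ s, ‖deriv l s‖ = 1) (hinj : Set.InjOn l (Set.Ico 0 L)) :
    ∃ C > 0, ∀ a b, ‖deriv l a / (l a - l b) - ((π / L * ct (π * ((a - b) / L)) : ℝ) : ℂ)‖ ≤ C := by
  have hd : Differentiable ℝ l := hsm.differentiable (by simp)
  have hd1 : ContDiff ℝ (⊤ : ℕ∞) (deriv l) := by
    have := (contDiff_infty_iff_deriv (𝕜 := ℝ) (f := l)).1 hsm
    exact this.2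
  have hd2 : Differentiable ℝ (deriv l) := hd1.differentiable (by simp)
  have hd3 : Continuous (deriv (deriv l)) :=
    ((contDiff_infty_iff_deriv (𝕜 := ℝ) (f := deriv l)).1 hd1).2.continuous
  have hp0 : ∀ f : ℝ → ℂ, (∀ s, f (s + L) = f s) → ∀ s, deriv f (s + L) = deriv f s := by
    intro f hf s
    rw [← deriv_comp_add_const]
    congr 1; funext t; exact hf t
  have hp2 : Function.Periodic (deriv (deriv l)) L := hp0 _ (hp0 _ hper)
  obtain ⟨K, hK⟩ : ∃ K > 0, ∀ s, ‖deriv (deriv l) s‖ ≤ K := by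
    obtain ⟨K, hK⟩ := (hp2.isBounded_of_continuous hL.ne' hd3).exists_norm_le
    exact ⟨max K 1, lt_max_of_lt_right one_pos, fun s =>
      (hK _ (Set.mem_range_self s)).trans (le_max_left _ _)⟩
  have hT := taylor1 l hd hd2 K hK.2
  obtain ⟨c, hc, hca⟩ := chord_arc L hL l hd.continuous hper harc hinj K hK.1 hT
  refine ⟨K / c + π / L * 4, by have := hK.1; positivity, ?_⟩
  -- local version
  have key : ∀ a b, |a - b| ≤ L / 2 →
      ‖deriv l a / (l a - l b) - ((π / L * ct (π * ((a - b) / L)) : ℝ) : ℂ)‖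
        ≤ K / c + π / L * 4 := by
    intro a b hab
    have hsplit : deriv l a / (l a - l b) - ((π / L * ct (π * ((a - b) / L)) : ℝ) : ℂ)
        = (deriv l a / (l a - l b) - 1 / ((a - b : ℝ) : ℂ)) +
          ((π / L * (1 / (π * ((a - b) / L)) - ct (π * ((a - b) / L))) : ℝ) : ℂ) := by
      have : π / L * (1 / (π * ((a - b) / L))) = 1 / (a - b) := by
        have := Real.pi_pos.ne'
        by_cases h : a - b = 0
        · simp [h]
        · field_simp
      rw [mul_sub, this]; push_cast; ring
    rw [hsplit]
    refine (norm_add_le _ _).trans (add_le_add ?_ ?_)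
    · by_cases h : a - b = 0
      · rw [sub_eq_zero] at h
        subst h
        have := hK.1
        simp; positivity
      · have hp : 0 < |a - b| := abs_pos.2 h
        have hw := hca a b hab
        have hw0 : l a - l b ≠ 0 := by
          intro h; rw [h, norm_zero] at hw; nlinarith
        have hu0 : ((a - b : ℝ) : ℂ) ≠ 0 := by exact_mod_cast h
        have e : deriv l a / (l a - l b) - 1 / ((a - b : ℝ) : ℂ) =
          - (l a - l b - ((a - b : ℝ) : ℂ) * deriv l a) / (((a - b : ℝ) : ℂ) * (l a - l b)) := by
          field_simp; ring
        rw [e, norm_div, norm_neg, norm_mul, Complex.norm_real, Real.norm_eq_abs,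
          div_le_div_iff₀ (by positivity) hc]
        have := hT a b
        have h5 := hK.1
        calc _ ≤ (K * |a - b| ^ 2) * c := by gcongr
          _ = K * (|a - b| * (c * |a - b|)) := by ring
          _ ≤ _ := by gcongr
    · rw [Complex.norm_real, Real.norm_eq_abs, abs_mul, abs_of_pos (by positivity : 0 < π / L)]
      gcongr
      apply ct_near
      rw [abs_mul, abs_div, abs_of_pos Real.pi_pos, abs_of_pos hL]
      have : |a - b| / L ≤ 1 / 2 := by rw [div_le_iff₀ hL]; linarith
      nlinarith [Real.pi_pos]
  intro a b
  have h1 := abs_sub_round ((a - b) / L)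
  set n := round ((a - b) / L)
  have h2 := key a (b + n * L) (by
    have : a - (b + n * L) = ((a - b) / L - n) * L := by field_simp; ring
    rw [this, abs_mul, abs_of_pos hL]; nlinarith)
  rw [per_int L l hper] at h2
  have h3 : π * ((a - b) / L) = π * ((a - (b + n * L)) / L) + n * π := by field_simp; ring
  rw [h3, ct_add_int]
  exact h2

lemma sum_shift (N : ℕ) (f : ℤ → ℝ) (hf : ∀ m, f (m + N) = f m) (m : ℕ) :
    ∑ i ∈ Finset.range N, f ((i : ℤ) - m) = ∑ i ∈ Finset.range N, f (i : ℤ) := by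
  induction m with
  | zero => simp
  | succ m ih =>
    rw [← ih]
    have h1 := Finset.sum_range_succ (fun i : ℕ => f ((i : ℤ) - (m + 1 : ℕ))) N
    have h2 := Finset.sum_range_succ' (fun i : ℕ => f ((i : ℤ) - (m + 1 : ℕ))) N
    have h3 : f ((N : ℤ) - (m + 1 : ℕ)) = f (((0 : ℕ) : ℤ) - (m + 1 : ℕ)) := by
      rw [← hf (((0 : ℕ) : ℤ) - (m + 1 : ℕ))]; congr 1; try (push_cast; ring)
    have h4 : ∑ i ∈ Finset.range N, f (((i + 1 : ℕ) : ℤ) - (m + 1 : ℕ)) =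
        ∑ i ∈ Finset.range N, f ((i : ℤ) - m) := by
      apply Finset.sum_congr rfl; intro i _; congr 1; push_cast; ring
    linarith

/-- Half-integer shift. -/
lemma sin_half_lower (N : ℕ) (hN : 0 < N) (σ : ℝ) (hσ : σ = 1/2 ∨ σ = -(1/2)) (m : ℤ) :
    1 / (N : ℝ) ≤ |Real.sin (π * (((m : ℝ) + σ) / N))| := by
  refine le_trans ?_ (sin_lower _)
  have hN' : (0:ℝ) < N := by exact_mod_cast hN
  set r := round (((m : ℝ) + σ) / N)
  have e : ((m : ℝ) + σ) / N - r = ((m : ℝ) + σ - r * N) / N := by field_simp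
  rw [e, abs_div, abs_of_pos hN', mul_div_assoc', div_le_div_iff_of_pos_right hN']
  have h2 : (2:ℝ) * |(m : ℝ) + σ - r * N| = |2 * ((m : ℝ) + σ - r * N)| := by
    rw [abs_mul, abs_two]
  rw [h2]
  rcases hσ with h | h
  · have e2 : 2 * ((m : ℝ) + σ - r * N) = ((2 * (m - r * N) + 1 : ℤ) : ℝ) := by
      rw [h]; push_cast; ring
    rw [e2]
    have : 2 * (m - r * N) + 1 ≠ 0 := by omega
    exact_mod_cast Int.one_le_abs this
  · have e2 : 2 * ((m : ℝ) + σ - r * N) = ((2 * (m - r * N) - 1 : ℤ) : ℝ) := by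
      rw [h]; push_cast; ring
    rw [e2]
    have : 2 * (m - r * N) - 1 ≠ 0 := by omega
    exact_mod_cast Int.one_le_abs this

lemma ct_sq_le (x : ℝ) : ct x ^ 2 ≤ 1 / Real.sin x ^ 2 := by
  unfold ct
  rw [div_pow]
  gcongr
  exact Real.cos_sq_le_one x

lemma sum_inv_sq (n : ℕ) : ∑ k ∈ Finset.range n, 1 / ((k : ℝ) + 1/2) ^ 2 ≤ 8 - 1 / (n : ℝ) := by
  induction n with
  | zero => norm_num
  | succ n ih =>
    rw [Finset.sum_range_succ]
    rcases Nat.eq_zero_or_pos n with h | h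
    · subst h; norm_num
    have hn : (0:ℝ) < n := by exact_mod_cast h
    have : 1 / ((n : ℝ) + 1/2) ^ 2 ≤ 1 / (n:ℝ) - 1 / ((n:ℝ) + 1) := by
      rw [div_sub_div _ _ hn.ne' (by positivity), div_le_div_iff₀ (by positivity) (by positivity)]
      nlinarith
    push_cast
    linarith

lemma ct_periodic (N : ℕ) (hN : 0 < N) (σ : ℝ) (m : ℤ) :
    ct (π * ((((m + N : ℤ) : ℝ) + σ) / N)) = ct (π * (((m : ℝ) + σ) / N)) := by
  have hN' : (0:ℝ) < N := by exact_mod_cast hN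
  rw [← ct_add_int (π * (((m : ℝ) + σ) / N)) 1]; congr 1; push_cast; field_simp; ring

lemma diag_half (N : ℕ) (hN : 0 < N) :
    ∑ i ∈ Finset.range N, ct (π * ((((i : ℤ) : ℝ) + 1/2) / N)) ^ 2 ≤ 4 * (N:ℝ) ^ 2 := by
  have hN' : (0:ℝ) < N := by exact_mod_cast hN
  have hb : ∀ i ∈ Finset.range N, ct (π * ((((i : ℤ) : ℝ) + 1/2) / N)) ^ 2 ≤
      (N:ℝ)^2 / 4 * (1 / ((i : ℝ) + 1/2) ^ 2 + 1 / (((N - 1 - i : ℕ) : ℝ) + 1/2) ^ 2) := by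
    intro i hi
    rw [Finset.mem_range] at hi
    have hc : ((N - 1 - i : ℕ) : ℝ) = N - 1 - i := by
      rw [Nat.cast_sub (by omega), Nat.cast_sub (by omega)]; simp
    have hi' : (i : ℝ) + 1 ≤ N := by exact_mod_cast hi
    refine (ct_sq_le _).trans ?_
    have h1 := sin_lower ((((i : ℤ) : ℝ) + 1/2) / N)
    rw [hc, Int.cast_natCast] at *
    set t := ((i : ℝ) + 1/2) / N with ht
    have ht0 : 0 < t := by positivity
    have ht1 : t < 1 := by rw [ht, div_lt_one hN']; linarith
    have hr : round t = 0 ∨ round t = 1 := by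
      rw [round_eq]
      have : 0 ≤ ⌊t + 1/2⌋ := Int.floor_nonneg.2 (by linarith)
      have : ⌊t + 1/2⌋ < 2 := Int.floor_lt.2 (by push_cast; linarith)
      omega
    have e1 : (N:ℝ)^2 / 4 * (1 / ((i : ℝ) + 1/2) ^ 2 + 1 / ((N:ℝ) - 1 - i + 1/2) ^ 2) =
        1 / (2 * t) ^ 2 + 1 / (2 * (1 - t)) ^ 2 := by
      have : 1 - t = ((N:ℝ) - 1 - i + 1/2) / N := by rw [ht]; field_simp; ring
      rw [this, ht]
      have : (N:ℝ) - 1 - i + 1/2 ≠ 0 := by linarith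
      field_simp
      try norm_num
    rw [e1, ← sq_abs (Real.sin _)]
    have ht2 : 0 < 1 - t := by linarith
    rcases hr with h | h
    · rw [h, Int.cast_zero, sub_zero, abs_of_pos ht0] at h1
      have : 1 / |Real.sin (π * t)| ^ 2 ≤ 1 / (2 * t) ^ 2 := by gcongr
      have : 0 ≤ 1 / (2 * (1 - t)) ^ 2 := by positivity
      linarith
    · rw [h, Int.cast_one, abs_sub_comm, abs_of_pos ht2] at h1
      have : 1 / |Real.sin (π * t)| ^ 2 ≤ 1 / (2 * (1 - t)) ^ 2 := by gcongr
      have : 0 ≤ 1 / (2 * t) ^ 2 := by positivity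
      linarith
  refine (Finset.sum_le_sum hb).trans ?_
  rw [← Finset.mul_sum, Finset.sum_add_distrib,
    Finset.sum_range_reflect (fun k : ℕ => 1 / ((k : ℝ) + 1/2) ^ 2)]
  have h := sum_inv_sq N
  have : 0 ≤ 1 / (N:ℝ) := by positivity
  nlinarith [sq_nonneg (N:ℝ)]

lemma diag_bound (N : ℕ) (hN : 0 < N) (σ : ℝ) (hσ : σ = 1/2 ∨ σ = -(1/2)) :
    ∑ i ∈ Finset.range N, ct (π * ((((i : ℤ) : ℝ) + σ) / N)) ^ 2 ≤ 4 * (N:ℝ) ^ 2 := by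
  rcases hσ with h | h
  · rw [h]; exact diag_half N hN
  · refine le_trans (le_of_eq ?_) (diag_half N hN)
    rw [← sum_shift N (fun m : ℤ => ct (π * (((m : ℝ) + 1/2) / N)) ^ 2)
      (fun m => by rw [ct_periodic N hN]) 1]
    apply Finset.sum_congr rfl; intro i _
    rw [h]; congr 4; push_cast; ring

lemma offdiag (N : ℕ) (hN : 0 < N) (σ : ℝ) (hσ : σ = 1/2 ∨ σ = -(1/2)) (j k : Fin N) (hjk : j ≠ k) :
    ∑ i ∈ Finset.range N, ct (π * (((((i : ℤ) - (j : ℕ) : ℤ) : ℝ) + σ) / N)) *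
      ct (π * (((((i : ℤ) - (k : ℕ) : ℤ) : ℝ) + σ) / N)) = -N := by
  have hN' : (0:ℝ) < N := by exact_mod_cast hN
  have hs : ∀ m : ℤ, Real.sin (π * (((m : ℝ) + σ) / N)) ≠ 0 := by
    intro m h
    have := sin_half_lower N hN σ hσ m
    rw [h, abs_zero] at this
    have : 0 < 1 / (N:ℝ) := by positivity
    linarith
  have hid : ∀ x y : ℝ, Real.sin x ≠ 0 → Real.sin y ≠ 0 →
      Real.sin (x - y) * (ct x * ct y + 1) = Real.cos (x - y) * (ct y - ct x) := by
    intro x y hx hy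
    rw [Real.sin_sub, Real.cos_sub]; unfold ct
    field_simp
  have hδ : Real.sin (π * (((k : ℕ) - (j : ℕ) : ℝ) / N)) ≠ 0 := by
    intro h
    rw [Real.sin_eq_zero_iff] at h
    obtain ⟨n, hn⟩ := h
    have h1 : (n : ℝ) * N = (k : ℕ) - (j : ℕ) := by
      have := Real.pi_pos.ne'
      field_simp at hn
      linarith
    have h2 : n * N = ((k : ℕ) : ℤ) - (j : ℕ) := by exact_mod_cast h1
    have hk := k.2
    have hj := j.2
    have hne : (k : ℕ) ≠ j := fun h => hjk (Fin.ext h.symm)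
    rcases lt_trichotomy n 0 with h | h | h
    · have : n * N ≤ -1 * N := by gcongr; omega
      omega
    · rw [h] at h2; omega
    · have : 1 * (N:ℤ) ≤ n * N := by gcongr; omega
      omega
  have hshift := fun m : ℕ => sum_shift N (fun m : ℤ => ct (π * (((m : ℝ) + σ) / N)))
      (fun m => by rw [ct_periodic N hN]) m
  have hsum : Real.sin (π * (((k : ℕ) - (j : ℕ) : ℝ) / N)) *
      (∑ i ∈ Finset.range N, (ct (π * (((((i : ℤ) - (j : ℕ) : ℤ) : ℝ) + σ) / N)) *
      ct (π * (((((i : ℤ) - (k : ℕ) : ℤ) : ℝ) + σ) / N)) + 1)) = 0 := by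
    rw [Finset.mul_sum]
    have : ∀ i ∈ Finset.range N, Real.sin (π * (((k : ℕ) - (j : ℕ) : ℝ) / N)) *
      (ct (π * (((((i : ℤ) - (j : ℕ) : ℤ) : ℝ) + σ) / N)) *
      ct (π * (((((i : ℤ) - (k : ℕ) : ℤ) : ℝ) + σ) / N)) + 1) =
      Real.cos (π * (((k : ℕ) - (j : ℕ) : ℝ) / N)) *
      (ct (π * (((((i : ℤ) - (k : ℕ) : ℤ) : ℝ) + σ) / N)) -
        ct (π * (((((i : ℤ) - (j : ℕ) : ℤ) : ℝ) + σ) / N))) := by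
      intro i _
      have e := hid _ _ (hs ((i : ℤ) - (j : ℕ))) (hs ((i : ℤ) - (k : ℕ)))
      have e2 : π * (((((i : ℤ) - (j : ℕ) : ℤ) : ℝ) + σ) / N) -
          π * (((((i : ℤ) - (k : ℕ) : ℤ) : ℝ) + σ) / N) = π * (((k : ℕ) - (j : ℕ) : ℝ) / N) := by
        push_cast; ring
      rw [e2] at e
      exact e
    rw [Finset.sum_congr rfl this, ← Finset.mul_sum, Finset.sum_sub_distrib, hshift k, hshift j,
      sub_self, mul_zero]
  have h0 := (mul_eq_zero.1 hsum).resolve_left hδ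
  rw [Finset.sum_add_distrib] at h0
  simp at h0
  push_cast at h0 ⊢
  linarith

lemma hilbert_bound (N : ℕ) (hN : 0 < N) (σ : ℝ) (hσ : σ = 1/2 ∨ σ = -(1/2)) (z : Fin N → ℝ) :
    ∑ i : Fin N, (∑ j : Fin N, ct (π * ((((i : ℕ) : ℝ) - ((j : ℕ) : ℝ) + σ) / N)) * z j) ^ 2
      ≤ 5 * (N:ℝ)^2 * ∑ j, z j ^ 2 := by
  have hN1 : (1:ℝ) ≤ N := by exact_mod_cast hN
  set c : ℕ → ℕ → ℝ := fun i j => ct (π * (((i : ℝ) - (j : ℝ) + σ) / N)) with hc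
  have hG : ∀ j k : Fin N, ∑ i : Fin N, c i j * c i k =
      -N + (if j = k then (∑ i ∈ Finset.range N, ct (π * ((((i : ℤ) : ℝ) + σ) / N)) ^ 2) + N else 0) := by
    intro j k
    rw [Fin.sum_univ_eq_sum_range (fun i => c i j * c i k) N]
    split_ifs with h
    · subst h
      rw [← sum_shift N (fun m : ℤ => ct (π * (((m : ℝ) + σ) / N)) ^ 2)
        (fun m => by rw [ct_periodic N hN]) j]
      simp only [hc]; push_cast
      rw [neg_add_eq_sub, add_sub_cancel_right]
      apply Finset.sum_congr rfl; intro i _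
      rw [sq]
    · have := offdiag N hN σ hσ j k h
      rw [add_zero, ← this]
      simp only [hc]; push_cast; rfl
  set D := ∑ i ∈ Finset.range N, ct (π * ((((i : ℤ) : ℝ) + σ) / N)) ^ 2
  have hD : D ≤ 4 * (N:ℝ)^2 := diag_bound N hN σ hσ
  have hexp : ∑ i : Fin N, (∑ j : Fin N, c i j * z j) ^ 2 =
      -N * (∑ j, z j)^2 + (D + N) * ∑ j, z j ^ 2 := by
    calc _ = ∑ i : Fin N, ∑ j : Fin N, ∑ k : Fin N, (c i j * c i k) * (z j * z k) := by
          apply Finset.sum_congr rfl; intro i _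
          rw [sq, Finset.sum_mul_sum]
          apply Finset.sum_congr rfl; intro j _
          apply Finset.sum_congr rfl; intro k _
          ring
      _ = ∑ j : Fin N, ∑ k : Fin N, (∑ i : Fin N, c i j * c i k) * (z j * z k) := by
          rw [Finset.sum_comm]
          apply Finset.sum_congr rfl; intro j _
          rw [Finset.sum_comm]
          apply Finset.sum_congr rfl; intro k _
          rw [Finset.sum_mul]
      _ = ∑ j : Fin N, ∑ k : Fin N, (-N * (z j * z k) + if j = k then (D + N) * (z j * z k) else 0) := by
          apply Finset.sum_congr rfl; intro j _
          apply Finset.sum_congr rfl; intro k _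
          rw [hG]; split_ifs <;> ring
      _ = _ := by
          simp only [Finset.sum_add_distrib, Finset.sum_ite_eq, Finset.mem_univ, if_true]
          simp only [← Finset.mul_sum, sq, Finset.sum_mul_sum]
  calc _ = _ := hexp
    _ ≤ (D + N) * ∑ j, z j ^ 2 := by
        have : 0 ≤ (N:ℝ) * (∑ j, z j)^2 := by positivity
        linarith
    _ ≤ _ := by
        apply mul_le_mul_of_nonneg_right _ (Finset.sum_nonneg fun _ _ => sq_nonneg _)
        nlinarith

lemma dot_tau (w T : ℂ) : dotR w T / ‖w‖ ^ 2 = (T / w).re := by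
  rw [Complex.div_re, ← Complex.normSq_eq_norm_sq, dotR]; ring

lemma dot_nu (w T : ℂ) : dotR w (-Complex.I * T) / ‖w‖ ^ 2 = (T / w).im := by
  rw [Complex.div_im, ← Complex.normSq_eq_norm_sq, dotR]
  simp; ring

lemma ct_sub (x y : ℝ) (hx : Real.sin x ≠ 0) (hy : Real.sin y ≠ 0) :
    ct x - ct y = Real.sin (y - x) / (Real.sin x * Real.sin y) := by
  unfold ct; rw [Real.sin_sub]; field_simp

lemma B_bound (L : ℝ) (hL : 0 < L) (l : ℝ → ℂ) (C : ℝ) (hC : 0 < C)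
    (hk : ∀ a b, ‖deriv l a / (l a - l b) - ((π / L * ct (π * ((a - b) / L)) : ℝ) : ℂ)‖ ≤ C)
    (M : ℝ) (hM : 0 < M) (κ : ℕ) (hκ : 2 ≤ κ) (α β σ : ℝ) (hαβ : α - β = σ)
    (hσ : σ = 1/2 ∨ σ = -(1/2)) (a b : (N : ℕ) → Fin N → ℝ)
    (ha : ∀ N, 2 ≤ N → ∀ i : Fin N, |a N i - (((i : ℕ) : ℝ) + α) * L / N| ≤ M / (N : ℝ) ^ (κ + 1))
    (hb : ∀ N, 2 ≤ N → ∀ i : Fin N, |b N i - (((i : ℕ) : ℝ) + β) * L / N| ≤ M / (N : ℝ) ^ (κ + 1)) :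
    ∃ K > 0, ∃ N₀ : ℕ, ∀ N : ℕ, N₀ ≤ N → ∀ z : Fin N → ℝ,
      (N : ℝ)⁻¹ * l2norm ((Bmat l (a N) (b N)).mulVec z) ≤ K * l2norm z := by
  have hpi := Real.pi_pos
  set E := C + π / L * (4 * π * M / L) with hE
  have hE0 : 0 < E := by positivity
  refine ⟨Real.sqrt (10 * (π / L) ^ 2 + 2 * E ^ 2), by positivity, max 2 ⌈4 * π * M / L⌉₊, ?_⟩
  intro N hN z
  have hN2 : 2 ≤ N := le_trans (le_max_left _ _) hN
  have hN0 : 0 < N := by omega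
  have hNM : 4 * π * M / L ≤ N := Nat.ceil_le.1 (le_trans (le_max_right _ _) hN)
  have hNp : (0:ℝ) < N := by exact_mod_cast hN0
  have hN1 : (1:ℝ) ≤ N := by exact_mod_cast hN0
  have hpow : M / (N : ℝ) ^ (κ + 1) ≤ M / (N:ℝ)^3 := by
    gcongr
    · omega
  set H : Fin N → Fin N → ℝ := fun i j => ct (π * ((((i : ℕ) : ℝ) - ((j : ℕ) : ℝ) + σ) / N)) with hH
  have hent : ∀ i j, |Bmat l (a N) (b N) i j - π / L * H i j| ≤ E := by
    intro i j
    set θ := π * ((((i : ℕ) : ℝ) - ((j : ℕ) : ℝ) + σ) / N) with hθ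
    set φ := π * ((a N i - b N j) / L) with hφ
    have h1 : |Bmat l (a N) (b N) i j - π / L * ct φ| ≤ C := by
      have h := (Complex.abs_re_le_norm _).trans (hk (a N i) (b N j))
      rw [Complex.sub_re, Complex.ofReal_re] at h
      rw [Bmat, Matrix.of_apply, dot_tau]
      exact h
    have h2 : |θ - φ| ≤ 2 * π * M / L / (N:ℝ)^3 := by
      have e : θ - φ = - (π / L * ((a N i - (((i : ℕ) : ℝ) + α) * L / N)
          - (b N j - (((j : ℕ) : ℝ) + β) * L / N))) := by
        rw [hθ, hφ, ← hαβ]; field_simp; ring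
      rw [e, abs_neg, abs_mul, abs_of_pos (by positivity : 0 < π / L)]
      have h3 := (abs_sub (a N i - (((i : ℕ) : ℝ) + α) * L / N)
          (b N j - (((j : ℕ) : ℝ) + β) * L / N))
      have h4 := ha N hN2 i
      have h5 := hb N hN2 j
      calc _ ≤ π / L * (M / (N:ℝ)^3 + M / (N:ℝ)^3) := by
            gcongr; linarith
        _ = _ := by ring
    have hs1 : 1 / (N:ℝ) ≤ |Real.sin θ| := by
      have := sin_half_lower N hN0 σ hσ ((i : ℕ) - (j : ℕ))
      push_cast at this
      exact this
    have h6 : 2 * π * M / L / (N:ℝ)^3 ≤ 1 / (2 * N) := by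
      rw [div_le_div_iff₀ (by positivity) (by positivity)]
      have : 2 * π * M / L * (2 * N) = 4 * π * M / L * N := by ring
      rw [this]
      calc _ ≤ (N:ℝ) * N := by gcongr
        _ ≤ _ := by nlinarith [mul_pos hNp hNp]
    have hs2 : 1 / (2 * N) ≤ |Real.sin φ| := by
      have h7 : |Real.sin θ - Real.sin φ| ≤ |θ - φ| := Real.abs_sin_sub_sin_le θ φ
      have h8 := abs_sub_abs_le_abs_sub (Real.sin θ) (Real.sin φ)
      have h9 : 1 / (N:ℝ) = 1 / (2 * N) + 1 / (2 * N) := by field_simp; norm_num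
      linarith
    have hsn1 : Real.sin θ ≠ 0 := by
      intro h; rw [h, abs_zero] at hs1
      have : 0 < 1 / (N:ℝ) := by positivity
      linarith
    have hsn2 : Real.sin φ ≠ 0 := by
      intro h; rw [h, abs_zero] at hs2
      have : 0 < 1 / (2 * (N:ℝ)) := by positivity
      linarith
    have h10 : |ct φ - ct θ| ≤ 4 * π * M / L := by
      rw [ct_sub _ _ hsn2 hsn1, abs_div, abs_mul]
      calc _ ≤ (2 * π * M / L / (N:ℝ)^3) / (1 / (2 * N) * (1 / N)) := by
            gcongr
            exact Real.abs_sin_le_abs.trans h2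
        _ = 4 * π * M / L / N := by field_simp; norm_num
        _ ≤ _ := div_le_self (by positivity) hN1
    have e : Bmat l (a N) (b N) i j - π / L * H i j =
        (Bmat l (a N) (b N) i j - π / L * ct φ) + π / L * (ct φ - ct θ) := by
      simp only [hH]; ring
    rw [e]
    refine (abs_add_le _ _).trans ?_
    rw [abs_mul, abs_of_pos (by positivity : 0 < π / L), hE]
    gcongr
  have hHb := hilbert_bound N hN0 σ hσ z
  have hz1 : (∑ j, |z j|) ^ 2 ≤ N * ∑ j, z j ^ 2 := by
    have := sq_sum_le_card_mul_sum_sq (s := Finset.univ) (f := fun j => |z j|)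
    simpa [sq_abs] using this
  have hrow : ∀ i, ((Bmat l (a N) (b N)).mulVec z i) ^ 2 ≤
      2 * (π / L) ^ 2 * (∑ j, H i j * z j) ^ 2 + 2 * E ^ 2 * (N * ∑ j, z j ^ 2) := by
    intro i
    have e : (Bmat l (a N) (b N)).mulVec z i = π / L * (∑ j, H i j * z j) +
        ∑ j, (Bmat l (a N) (b N) i j - π / L * H i j) * z j := by
      rw [Matrix.mulVec, dotProduct, Finset.mul_sum, ← Finset.sum_add_distrib]
      apply Finset.sum_congr rfl; intro j _; ring
    have h2 : |∑ j, (Bmat l (a N) (b N) i j - π / L * H i j) * z j| ≤ E * ∑ j, |z j| := by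
      refine (Finset.abs_sum_le_sum_abs _ _).trans ?_
      rw [Finset.mul_sum]
      apply Finset.sum_le_sum; intro j _
      rw [abs_mul]; gcongr; exact hent i j
    have h3 : (∑ j, (Bmat l (a N) (b N) i j - π / L * H i j) * z j) ^ 2 ≤
        E ^ 2 * (N * ∑ j, z j ^ 2) := by
      rw [← sq_abs]
      calc _ ≤ (E * ∑ j, |z j|) ^ 2 := by gcongr
        _ = E ^ 2 * (∑ j, |z j|) ^ 2 := by ring
        _ ≤ _ := by gcongr
    rw [e]
    set p := π / L * (∑ j, H i j * z j)
    set q := ∑ j, (Bmat l (a N) (b N) i j - π / L * H i j) * z j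
    have hp : p ^ 2 = (π / L) ^ 2 * (∑ j, H i j * z j) ^ 2 := by simp only [p]; ring
    nlinarith [sq_nonneg (p - q)]
  have htot : ∑ i, ((Bmat l (a N) (b N)).mulVec z i) ^ 2 ≤
      (10 * (π / L) ^ 2 + 2 * E ^ 2) * (N:ℝ)^2 * ∑ j, z j ^ 2 := by
    refine (Finset.sum_le_sum fun i _ => hrow i).trans ?_
    rw [Finset.sum_add_distrib, ← Finset.mul_sum]
    simp only [Finset.sum_const, Finset.card_univ, Fintype.card_fin, nsmul_eq_mul]
    have : 2 * (π / L) ^ 2 * ∑ i, (∑ j, H i j * z j) ^ 2 ≤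
      2 * (π / L) ^ 2 * (5 * (N:ℝ)^2 * ∑ j, z j ^ 2) := by gcongr
    linarith
  unfold l2norm
  rw [← Real.sqrt_mul (by positivity), inv_mul_le_iff₀ hNp]
  apply Real.sqrt_le_iff.2
  refine ⟨by positivity, ?_⟩
  rw [mul_pow, Real.sq_sqrt (by
    have : 0 ≤ ∑ j, z j ^ 2 := Finset.sum_nonneg fun _ _ => sq_nonneg _
    positivity)]
  calc _ ≤ (N:ℝ)⁻¹ * ((10 * (π / L) ^ 2 + 2 * E ^ 2) * (N:ℝ)^2 * ∑ j, z j ^ 2) := by gcongr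
    _ = _ := by ring

lemma A_bound (l : ℝ → ℂ) (C : ℝ) (hC : 0 < C) (L : ℝ)
    (hk : ∀ a b, ‖deriv l a / (l a - l b) - ((π / L * ct (π * ((a - b) / L)) : ℝ) : ℂ)‖ ≤ C)
    (N : ℕ) (hN : 0 < N) (a b : Fin N → ℝ) (z : Fin N → ℝ) (i : Fin N) :
    |(Amat l a b).mulVec z i| ≤ C * N * l1norm z := by
  have hNp : (0:ℝ) < N := by exact_mod_cast hN
  have e : C * N * l1norm z = C * ∑ j, |z j| := by unfold l1norm; field_simp
  rw [e, Matrix.mulVec, dotProduct]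
  refine (Finset.abs_sum_le_sum_abs _ _).trans ?_
  rw [Finset.mul_sum]
  apply Finset.sum_le_sum; intro j _
  rw [abs_mul]; gcongr
  have h := (Complex.abs_im_le_norm _).trans (hk (a i) (b j))
  rw [Complex.sub_im, Complex.ofReal_im, sub_zero] at h
  rw [Amat, Matrix.of_apply, normalv, dot_nu]
  exact h

lemma lp_le (N : ℕ) (hN : 0 < N) (p : ℝ) (hp : 1 ≤ p) (x : Fin N → ℝ) (R : ℝ) (hR : 0 ≤ R)
    (hx : ∀ i, |x i| ≤ R) : ((N : ℝ)⁻¹ * ∑ i, |x i| ^ p) ^ (1/p) ≤ R := by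
  have hNp : (0:ℝ) < N := by exact_mod_cast hN
  have h1 : (N : ℝ)⁻¹ * ∑ i, |x i| ^ p ≤ R ^ p := by
    rw [inv_mul_le_iff₀ hNp]
    calc _ ≤ ∑ i : Fin N, R ^ p := by
          apply Finset.sum_le_sum; intro i _
          exact Real.rpow_le_rpow (abs_nonneg _) (hx i) (by linarith)
      _ = _ := by simp
  calc _ ≤ (R ^ p) ^ (1/p) := by
        apply Real.rpow_le_rpow _ h1 (by positivity)
        have : 0 ≤ ∑ i, |x i| ^ p := Finset.sum_nonneg fun _ _ => by positivity
        positivity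
    _ = R := by
        rw [← Real.rpow_mul hR, mul_one_div_cancel (by linarith), Real.rpow_one]

/-- Uniform boundedness of the discretized operators `A_N, Ã_N, B_N, B̃_N`. -/
theorem discretized_operator_boundedness
    (L : ℝ) (hL : 0 < L) (l : ℝ → ℂ)
    (hsm : ContDiff ℝ (⊤ : ℕ∞) l) (hper : ∀ s, l (s + L) = l s)
    (harc : ∀ s, ‖deriv l s‖ = 1) (hinj : Set.InjOn l (Set.Ico 0 L))
    (κ : ℕ) (hκ : 2 ≤ κ) (M : ℝ) (hM : 0 < M)
    (ms mst : (N : ℕ) → Fin N → ℝ)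
    (hms : ∀ N, 2 ≤ N → ∀ i : Fin N, ms N i ∈ Set.Ico (0:ℝ) L ∧
      |ms N i - ((i : ℕ) : ℝ) * L / (N : ℝ)| ≤ M / (N : ℝ) ^ (κ + 1))
    (hmst : ∀ N, 2 ≤ N → ∀ i : Fin N, mst N i ∈ Set.Ico (0:ℝ) L ∧
      |mst N i - (((i : ℕ) : ℝ) + 1/2) * L / (N : ℝ)| ≤ M / (N : ℝ) ^ (κ + 1)) :
    ∃ C > 0, ∃ N₀ : ℕ, ∀ N : ℕ, N₀ ≤ N → ∀ z : Fin N → ℝ,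
      (∀ p : ℝ, 1 ≤ p →
        (N : ℝ)⁻¹ * (((N : ℝ)⁻¹ * ∑ i, |(Amat l (mst N) (ms N)).mulVec z i| ^ p) ^ (1/p)
          + ((N : ℝ)⁻¹ * ∑ i, |(Amat l (ms N) (mst N)).mulVec z i| ^ p) ^ (1/p))
          ≤ C * l1norm z) ∧
      (∀ i : Fin N,
        (N : ℝ)⁻¹ * (|(Amat l (mst N) (ms N)).mulVec z i|
          + |(Amat l (ms N) (mst N)).mulVec z i|) ≤ C * l1norm z) ∧
      (N : ℝ)⁻¹ * (l2norm ((Bmat l (mst N) (ms N)).mulVec z)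
          + l2norm ((Bmat l (ms N) (mst N)).mulVec z)) ≤ C * l2norm z := by
  obtain ⟨C, hC, hk⟩ := kernel_bound L hL l hsm hper harc hinj
  obtain ⟨K1, hK1, N1, hB1⟩ := B_bound L hL l C hC hk M hM κ hκ (1/2) 0 (1/2) (by norm_num)
    (Or.inl rfl) mst ms (fun N hN i => (hmst N hN i).2)
    (fun N hN i => by rw [add_zero]; exact (hms N hN i).2)
  obtain ⟨K2, hK2, N2, hB2⟩ := B_bound L hL l C hC hk M hM κ hκ 0 (1/2) (-(1/2)) (by norm_num)
    (Or.inr rfl) ms mst (fun N hN i => by rw [add_zero]; exact (hms N hN i).2)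
    (fun N hN i => (hmst N hN i).2)
  refine ⟨2 * C + K1 + K2, by positivity, max 1 (max N1 N2), fun N hN z => ?_⟩
  have hN0 : 0 < N := le_trans (le_max_left _ _) hN
  have hN1 : N1 ≤ N := le_trans (le_trans (le_max_left _ _) (le_max_right _ _)) hN
  have hN2 : N2 ≤ N := le_trans (le_trans (le_max_right _ _) (le_max_right _ _)) hN
  have hNp : (0:ℝ) < N := by exact_mod_cast hN0
  have hz1 : 0 ≤ l1norm z := by unfold l1norm; positivity
  have hz2 : 0 ≤ l2norm z := by unfold l2norm; positivity
  have hA1 := A_bound l C hC L hk N hN0 (mst N) (ms N) z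
  have hA2 := A_bound l C hC L hk N hN0 (ms N) (mst N) z
  have hfin : ∀ x y : ℝ, x ≤ C * N * l1norm z → y ≤ C * N * l1norm z →
      (N:ℝ)⁻¹ * (x + y) ≤ (2 * C + K1 + K2) * l1norm z := by
    intro x y hx hy
    rw [inv_mul_le_iff₀ hNp]
    have : 0 ≤ (N:ℝ) * ((K1 + K2) * l1norm z) := by positivity
    linarith
  refine ⟨fun p hp => ?_, fun i => hfin _ _ (hA1 i) (hA2 i), ?_⟩
  · exact hfin _ _ (lp_le N hN0 p hp _ _ (by positivity) hA1)
      (lp_le N hN0 p hp _ _ (by positivity) hA2)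
  · rw [mul_add]
    have h1 := hB1 N hN1 z
    have h2 := hB2 N hN2 z
    have : 0 ≤ 2 * C * l2norm z := by positivity
    linarith
end
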